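/- Fix n ≥ 1, ε > 0 and λ > 0. Let f : ℝⁿ → ℝ be a smooth ℤⁿ-periodic function with −Σᵢ₌₁ⁿ ∂ᵢ²f = λf (an eigenfunction of the Laplacian of the flat torus with eigenvalue λ). Let φ : ℝⁿ × ℝ → ℝ be a smooth function, ℤⁿ-periodic in x, satisfying the equation (∂ₜ²φ)·(1 + Σᵢ ∂ᵢ²φ) = Σᵢ (∂ᵢ∂ₜφ)² + ε everywhere. Then the quantity I(t) = ∫_{[0,1]ⁿ} exp(√(λ/ε)·∂ₜφ(x,t))·f(x)·(1 + Σᵢ ∂ᵢ²φ(x,t)) dx does not vary with t; i.e. I is a constant function of t. -/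

import Mathlib

/-!
With `u = ∂ₜφ`, `w = 1 + Σᵢ ∂ᵢ²φ` and `c = √(λ/ε)`, the equation `uₜ w = |∇u|² + ε` gives
`∂ₜ(e^{cu} f w) = e^{cu} f (c uₜ w + Σᵢ ∂ᵢ²u) = e^{cu} f (c |∇u|² + c ε + Σᵢ ∂ᵢ²u)`.
Since `c² ε = λ` and `-Σᵢ ∂ᵢ²f = λ f`, this is the divergence in `x` of the periodic vector field
`Vᵢ = e^{cu} (f ∂ᵢu - ∂ᵢf / c)` (`fpd_flux`). The integral of such a divergence over a
fundamental domain vanishes, because the contributions of opposite faces cancel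
(`integral_div_eq_zero`). Differentiating under the integral sign over the compact cube
(`hasDerivAt_integral_cube`) then shows that `I` has zero derivative.
-/

open MeasureTheory

/-- The `t`-partial derivative of a function on `ℝⁿ × ℝ`. -/
noncomputable def pdt {n : ℕ} (Φ : (Fin n → ℝ) × ℝ → ℝ) (p : (Fin n → ℝ) × ℝ) : ℝ :=
  fderiv ℝ Φ p (0, 1)

/-- The `xᵢ`-partial derivative of a function on `ℝⁿ × ℝ`. -/
noncomputable def pdx {n : ℕ} (i : Fin n) (Φ : (Fin n → ℝ) × ℝ → ℝ)
    (p : (Fin n → ℝ) × ℝ) : ℝ :=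
  fderiv ℝ Φ p (Pi.single i 1, 0)

/-- The `xᵢ`-partial derivative of a function on `ℝⁿ`. -/
noncomputable def fpd {n : ℕ} (i : Fin n) (f : (Fin n → ℝ) → ℝ) (x : Fin n → ℝ) : ℝ :=
  fderiv ℝ f x (Pi.single i 1)

open scoped ContDiff

section Calculus

variable {n : ℕ}

lemma contDiff_pd {E : Type*} [NormedAddCommGroup E] [NormedSpace ℝ E] {Φ : E → ℝ}
    (h : ContDiff ℝ ∞ Φ) (v : E) : ContDiff ℝ ∞ (fun p => fderiv ℝ Φ p v) :=
  (h.fderiv_right (m := ∞) (by simp)).clm_apply contDiff_const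

lemma contDiff_pdt {Φ : (Fin n → ℝ) × ℝ → ℝ} (h : ContDiff ℝ ∞ Φ) : ContDiff ℝ ∞ (pdt Φ) :=
  contDiff_pd h _

lemma contDiff_pdx {Φ : (Fin n → ℝ) × ℝ → ℝ} (h : ContDiff ℝ ∞ Φ) (i : Fin n) :
    ContDiff ℝ ∞ (pdx i Φ) :=
  contDiff_pd h _

lemma contDiff_fpd {f : (Fin n → ℝ) → ℝ} (h : ContDiff ℝ ∞ f) (i : Fin n) :
    ContDiff ℝ ∞ (fpd i f) :=
  contDiff_pd h _

/-- Symmetry of second derivatives, for directional derivatives along `v` and `w`. -/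
lemma pd_comm {E : Type*} [NormedAddCommGroup E] [NormedSpace ℝ E] {Φ : E → ℝ}
    (h : ContDiff ℝ ∞ Φ) (v w p : E) :
    fderiv ℝ (fun q => fderiv ℝ Φ q v) p w = fderiv ℝ (fun q => fderiv ℝ Φ q w) p v := by
  have hd : DifferentiableAt ℝ (fderiv ℝ Φ) p :=
    ((h.fderiv_right (m := ∞) (by simp)).differentiable (by simp)) p
  have hs : IsSymmSndFDerivAt ℝ Φ p := h.contDiffAt.isSymmSndFDerivAt
    (by simpa using WithTop.coe_le_coe.2 (le_top : (2 : ℕ∞) ≤ ⊤))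
  rw [fderiv_clm_apply hd (by fun_prop), fderiv_clm_apply hd (by fun_prop)]
  simpa using hs.eq w v

lemma pdt_pdx {Φ : (Fin n → ℝ) × ℝ → ℝ} (h : ContDiff ℝ ∞ Φ) (i : Fin n) :
    pdt (pdx i Φ) = pdx i (pdt Φ) :=
  funext fun p => pd_comm h _ _ p

lemma pd_periodic {E : Type*} [NormedAddCommGroup E] [NormedSpace ℝ E] {Φ : E → ℝ} {a : E}
    (h : ∀ p, Φ (p + a) = Φ p) (v p : E) : fderiv ℝ Φ (p + a) v = fderiv ℝ Φ p v := by
  rw [← fderiv_comp_add_right, funext h]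

lemma hasFDerivAt_slice {Ψ : (Fin n → ℝ) × ℝ → ℝ} (h : ContDiff ℝ ∞ Ψ) (x : Fin n → ℝ) (t : ℝ) :
    HasFDerivAt (fun y => Ψ (y, t))
      ((fderiv ℝ Ψ (x, t)).comp (ContinuousLinearMap.inl ℝ (Fin n → ℝ) ℝ)) x :=
  HasFDerivAt.comp x ((h.differentiable (by simp)) (x, t)).hasFDerivAt
    (hasFDerivAt_prodMk_left x t)

lemma hasDerivAt_time {Ψ : (Fin n → ℝ) × ℝ → ℝ} (h : ContDiff ℝ ∞ Ψ) (x : Fin n → ℝ) (t : ℝ) :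
    HasDerivAt (fun s => Ψ (x, s)) (pdt Ψ (x, t)) t := by
  have hl : HasDerivAt (fun s : ℝ => (x, s)) (0, 1) t :=
    (hasDerivAt_const t x).prodMk (hasDerivAt_id t)
  exact ((h.differentiable (by simp)) (x, t)).hasFDerivAt.comp_hasDerivAt t hl

end Calculus

/-- The divergence of a smooth `ℤⁿ`-periodic vector field integrates to zero over the unit cube:
the fluxes through opposite faces cancel. -/
lemma integral_div_eq_zero {n : ℕ} (hn : 1 ≤ n) (V : Fin n → (Fin n → ℝ) → ℝ)
    (hV : ∀ i, ContDiff ℝ ∞ (V i))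
    (hper : ∀ i (k : Fin n → ℤ) (x : Fin n → ℝ), V i (x + fun j => (k j : ℝ)) = V i x) :
    ∫ x in Set.Icc (0 : Fin n → ℝ) 1, ∑ i, fpd i (V i) x = 0 := by
  obtain ⟨m, rfl⟩ : ∃ m, n = m + 1 := ⟨n - 1, by omega⟩
  have hc : Continuous fun x => ∑ i, fpd i (V i) x :=
    continuous_finsetSum _ fun i _ => (contDiff_fpd (hV i) i).continuous
  have key := integral_divergence_of_hasFDerivAt_off_countable' (0 : Fin (m + 1) → ℝ) 1
    zero_le_one V (fun i x => fderiv ℝ (V i) x) ∅ Set.countable_empty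
    (fun i => (hV i).continuous.continuousOn)
    (fun x _ i => ((hV i).differentiable (by simp) x).hasFDerivAt)
    (hc.continuousOn.integrableOn_compact isCompact_Icc)
  refine key.trans (Finset.sum_eq_zero fun i _ => ?_)
  rw [sub_eq_zero]
  congr 1
  funext y
  -- The face `xᵢ = 1` is the translate of the face `xᵢ = 0` by the `i`-th lattice generator.
  rw [← hper i (Pi.single i 1) (i.insertNth ((0 : Fin (m + 1) → ℝ) i) y)]
  congr 1
  funext j
  refine Fin.succAboveCases i ?_ (fun j => ?_) j <;> simp

/-- Differentiation under the integral sign over the unit cube. -/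
lemma hasDerivAt_integral_cube {n : ℕ} {G : (Fin n → ℝ) × ℝ → ℝ} (hG : ContDiff ℝ ∞ G) (t : ℝ) :
    HasDerivAt (fun s => ∫ x in Set.Icc (0 : Fin n → ℝ) 1, G (x, s))
      (∫ x in Set.Icc (0 : Fin n → ℝ) 1, pdt G (x, t)) t := by
  have hs : ∀ {Ψ : (Fin n → ℝ) × ℝ → ℝ} (s : ℝ), ContDiff ℝ ∞ Ψ →
      IntegrableOn (fun x => Ψ (x, s)) (Set.Icc (0 : Fin n → ℝ) 1) := fun s h =>
    (h.continuous.comp (by fun_prop : Continuous fun x : Fin n → ℝ => (x, s))).continuousOn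
      |>.integrableOn_compact isCompact_Icc
  obtain ⟨C, hC⟩ := ((isCompact_Icc (a := (0 : Fin n → ℝ)) (b := 1)).prod
    (isCompact_closedBall t 1)).exists_bound_of_continuousOn
      (contDiff_pdt hG).continuous.continuousOn
  refine (hasDerivAt_integral_of_dominated_loc_of_deriv_le (F := fun s x => G (x, s))
    (F' := fun s x => pdt G (x, s)) (bound := fun _ => C)
    (Metric.ball_mem_nhds t one_pos) (.of_forall fun s => (hs s hG).aestronglyMeasurable)
    (hs t hG) (hs t (contDiff_pdt hG)).aestronglyMeasurable ?_ ?_ ?_).2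
  · filter_upwards [ae_restrict_mem measurableSet_Icc] with x hx s hxs
    exact hC (x, s) ⟨hx, Metric.ball_subset_closedBall hxs⟩
  · exact continuousOn_const.integrableOn_compact isCompact_Icc
  · exact .of_forall fun x s _ => hasDerivAt_time hG x s

/-- The pointwise divergence of the flux `e^{cu} (f ∂ᵢu - ∂ᵢf / c)`, one component at a time; the
cross terms `∂ᵢu ∂ᵢf` cancel. -/
lemma fpd_flux {n : ℕ} {f : (Fin n → ℝ) → ℝ} (hf : ContDiff ℝ ∞ f)
    {u : (Fin n → ℝ) × ℝ → ℝ} (hu : ContDiff ℝ ∞ u) {c : ℝ} (hc : c ≠ 0) (t : ℝ)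
    (i : Fin n) (x : Fin n → ℝ) :
    fpd i (fun y => Real.exp (c * u (y, t)) * (f y * pdx i u (y, t) - c⁻¹ * fpd i f y)) x =
      Real.exp (c * u (x, t)) * (f x * (c * pdx i u (x, t) ^ 2 + pdx i (pdx i u) (x, t))
        - c⁻¹ * fpd i (fpd i f) x) := by
  have h1 := ((hasFDerivAt_slice hu x t).const_mul c).exp
  have h2 := (hf.differentiable (by simp) x).hasFDerivAt
  have h3 := hasFDerivAt_slice (contDiff_pdx hu i) x t
  have h4 := ((contDiff_fpd hf i).differentiable (by simp) x).hasFDerivAt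
  have hV : HasFDerivAt
      (fun y => Real.exp (c * u (y, t)) * (f y * pdx i u (y, t) - c⁻¹ * fpd i f y)) _ x :=
    h1.mul ((h2.mul h3).sub (h4.const_mul c⁻¹))
  rw [fpd, hV.fderiv]
  have e1 : fderiv ℝ u (x, t) (Pi.single i 1, 0) = pdx i u (x, t) := rfl
  have e2 : fderiv ℝ (pdx i u) (x, t) (Pi.single i 1, 0) = pdx i (pdx i u) (x, t) := rfl
  have e3 : fderiv ℝ f x (Pi.single i 1) = fpd i f x := rfl
  have e4 : fderiv ℝ (fpd i f) x (Pi.single i 1) = fpd i (fpd i f) x := rfl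
  simp [e1, e2, e3, e4]
  field_simp
  ring

/-- Conservation law (Proposition 3): if `f` is a `ℤⁿ`-periodic eigenfunction of the flat-torus
Laplacian with eigenvalue `λ > 0`, and `φ` is a smooth `ℤⁿ`-periodic solution of
`∂ₜ²φ·(1 − Δ_X φ) = |∇_X ∂ₜφ|² + ε`, then
`I(t) = ∫_{[0,1]ⁿ} exp(√(λ/ε)·∂ₜφ)·f·(1 + Σᵢ ∂ᵢ²φ) dx` is independent of `t`. -/
theorem nahm_conserved_quantity {n : ℕ} (hn : 1 ≤ n) (ε lam : ℝ) (hε : 0 < ε)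
    (hlam : 0 < lam) (f : (Fin n → ℝ) → ℝ) (hf : ContDiff ℝ (⊤ : ℕ∞) f)
    (hfper : ∀ (k : Fin n → ℤ) (x : Fin n → ℝ), f (x + fun i => (k i : ℝ)) = f x)
    (hfeig : ∀ x, -∑ i : Fin n, fpd i (fpd i f) x = lam * f x)
    (φ : (Fin n → ℝ) × ℝ → ℝ) (hφ : ContDiff ℝ (⊤ : ℕ∞) φ)
    (hφper : ∀ (k : Fin n → ℤ) (x : Fin n → ℝ) (t : ℝ),
      φ (x + fun i => (k i : ℝ), t) = φ (x, t))
    (hφeq : ∀ p : (Fin n → ℝ) × ℝ,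
      pdt (pdt φ) p * (1 + ∑ i : Fin n, pdx i (pdx i φ) p) =
        (∑ i : Fin n, (pdx i (pdt φ) p) ^ 2) + ε) :
    ∀ s t : ℝ,
      (∫ x in Set.Icc (0 : Fin n → ℝ) 1,
          Real.exp (Real.sqrt (lam / ε) * pdt φ (x, s)) * f x *
            (1 + ∑ i : Fin n, pdx i (pdx i φ) (x, s))) =
        ∫ x in Set.Icc (0 : Fin n → ℝ) 1,
          Real.exp (Real.sqrt (lam / ε) * pdt φ (x, t)) * f x *
            (1 + ∑ i : Fin n, pdx i (pdx i φ) (x, t)) := by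
  obtain ⟨c, hcdef⟩ : ∃ c, c = Real.sqrt (lam / ε) := ⟨_, rfl⟩
  have hc : c ≠ 0 := hcdef ▸ (Real.sqrt_pos.2 (div_pos hlam hε)).ne'
  have hcε : c * ε = c⁻¹ * lam := by
    have : c ^ 2 = lam / ε := hcdef ▸ Real.sq_sqrt (div_pos hlam hε).le
    field_simp
    rw [this]
    field_simp
  rw [← hcdef]
  have hu := contDiff_pdt hφ
  have hw : ContDiff ℝ ∞ fun p => 1 + ∑ i : Fin n, pdx i (pdx i φ) p :=
    contDiff_const.add (ContDiff.sum fun i _ => contDiff_pdx (contDiff_pdx hφ i) i)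
  let G : (Fin n → ℝ) × ℝ → ℝ := fun p =>
    Real.exp (c * pdt φ p) * f p.1 * (1 + ∑ i : Fin n, pdx i (pdx i φ) p)
  have hG : ContDiff ℝ ∞ G := (((contDiff_const.mul hu).exp).mul (hf.comp contDiff_fst)).mul hw
  let V : ℝ → Fin n → (Fin n → ℝ) → ℝ := fun t i y =>
    Real.exp (c * pdt φ (y, t)) * (f y * pdx i (pdt φ) (y, t) - c⁻¹ * fpd i f y)
  have hslice : ∀ t : ℝ, ContDiff ℝ ∞ fun y : Fin n → ℝ => (y, t) := fun t =>
    contDiff_id.prodMk contDiff_const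
  have hV : ∀ t i, ContDiff ℝ ∞ (V t i) := fun t i =>
    (contDiff_const.mul (hu.comp (hslice t))).exp.mul
      ((hf.mul ((contDiff_pdx hu i).comp (hslice t))).sub
        (contDiff_const.mul (contDiff_fpd hf i)))
  have hVper : ∀ t i (k : Fin n → ℤ) (x : Fin n → ℝ),
      V t i (x + fun j => (k j : ℝ)) = V t i x := by
    intro t i k x
    have h1 : ∀ p, φ (p + ((fun j => (k j : ℝ)), 0)) = φ p := fun ⟨y, s⟩ => by
      simpa using hφper k y s
    have h2 : ∀ p, pdt φ (p + ((fun j => (k j : ℝ)), 0)) = pdt φ p := pd_periodic h1 _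
    have h3 : ∀ p, pdx i (pdt φ) (p + ((fun j => (k j : ℝ)), 0)) = pdx i (pdt φ) p :=
      pd_periodic h2 _
    have h4 : fpd i f (x + fun j => (k j : ℝ)) = fpd i f x := pd_periodic (hfper k) _ _
    have h2' := h2 (x, t)
    have h3' := h3 (x, t)
    simp only [Prod.mk_add_mk, add_zero] at h2' h3'
    simp only [V, h2', h3', h4, hfper]
  -- The local conservation law: the time derivative of the density is the divergence of the flux.
  have hdiv : ∀ x t, pdt G (x, t) = ∑ i, fpd i (V t i) x := by
    intro x t
    have hwt : HasDerivAt (fun s => 1 + ∑ i : Fin n, pdx i (pdx i φ) (x, s))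
        (∑ i : Fin n, pdx i (pdx i (pdt φ)) (x, t)) t := by
      refine (HasDerivAt.fun_sum fun i _ => ?_).const_add 1
      rw [← pdt_pdx hφ i, ← pdt_pdx (contDiff_pdx hφ i) i]
      exact hasDerivAt_time (contDiff_pdx (contDiff_pdx hφ i) i) x t
    have hprod := ((((hasDerivAt_time hu x t).const_mul c).exp).mul_const (f x)).mul hwt
    rw [(hasDerivAt_time hG x t).unique hprod]
    simp only [V, fpd_flux hf hu hc]
    rw [← Finset.mul_sum, Finset.sum_sub_distrib, ← Finset.mul_sum, ← Finset.mul_sum,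
      Finset.sum_add_distrib, ← Finset.mul_sum]
    -- Both equations enter, and `c * ε = c⁻¹ * lam` balances the zeroth-order terms.
    linear_combination (Real.exp (c * pdt φ (x, t)) * f x * c) * hφeq (x, t)
      - (Real.exp (c * pdt φ (x, t)) * c⁻¹) * hfeig x
      + (Real.exp (c * pdt φ (x, t)) * f x) * hcε
  have hder : ∀ t, HasDerivAt (fun s => ∫ x in Set.Icc (0 : Fin n → ℝ) 1, G (x, s)) 0 t := by
    intro t
    have h := hasDerivAt_integral_cube hG t
    simp only [hdiv] at h
    rwa [integral_div_eq_zero hn (V t) (hV t) (hVper t)] at h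
  exact fun s t => is_const_of_deriv_eq_zero (fun r => (hder r).differentiableAt)
    (fun r => (hder r).deriv) s t
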